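/- Theorem 3: There are no coprime positive integers p > q of opposite parity for which (p⁴−4p³q−q⁴)(p⁴+4p³q−q⁴)(p⁴−4pq³−q⁴)(p⁴+4pq³−q⁴) is the square of an integer. -/

import Mathlib

/-!
With `m = (p² + q²)²` and `n = 2pq(p² - q²)`, the quantity in the theorem is
`m⁴ - 6m²n² + n⁴ = (m² - n²)² - (2mn)²`. Put `A = m² - n²` and `B = 2mn`, so that
`A² + B² = (m² + n²)²`. If the quantity is a square `w²`, then `A⁴ - B⁴ = C²` with
`C = (m² + n²)w`, which is impossible for nonzero `B`, `C` by Fermat's theorem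
(`fourth_sub_fourth_ne_sq`). Here `B ≠ 0` because `0 < q < p`, and `w ≠ 0` because `p`, `q` have
opposite parity, which makes the quantity odd.

Since `C⁴ + 4(AB)⁴ = (A⁴ + B⁴)²`, Fermat's theorem follows from the insolubility of
`x⁴ + 4y⁴ = z²` in nonzero integers, proved in `fourth_add_four_mul_fourth_ne_sq` by infinite
descent on `z`.
-/

/-- For nonnegative `a`, the sign ambiguity in `Int.sq_of_gcd_eq_one` disappears. -/
lemma exists_eq_sq_of_coprime {a b c : ℤ} (ha : 0 ≤ a) (hab : Int.gcd a b = 1)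
    (h : a * b = c ^ 2) : ∃ r : ℤ, a = r ^ 2 := by
  obtain ⟨r, hr | hr⟩ := Int.sq_of_gcd_eq_one hab h
  · exact ⟨r, hr⟩
  · exact ⟨0, by nlinarith [sq_nonneg r]⟩

lemma exists_eq_sq_sq_of_coprime {a b c : ℤ} (ha : 0 < a) (hab : Int.gcd a b = 1)
    (h : a * b = c ^ 2) : ∃ r s : ℤ, a = r ^ 2 ∧ b = s ^ 2 := by
  have hb : 0 ≤ b := by
    by_contra hb
    nlinarith [sq_nonneg c, mul_pos ha (show 0 < -b by omega)]
  obtain ⟨r, hr⟩ := exists_eq_sq_of_coprime ha.le hab h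
  obtain ⟨s, hs⟩ := exists_eq_sq_of_coprime hb (by rwa [Int.gcd_comm]) (by rw [mul_comm]; exact h)
  exact ⟨r, s, hr, hs⟩

/-- The last step of the descent: a coprime pair `m`, `n` with `m` even and `2mn` a nonzero square
is of the form `(2i², j²)`, so that `m² + n² = j⁴ + 4i⁴`. -/
lemma sq_add_sq_of_two_mul_eq_sq {m n s : ℤ} (hs : s ≠ 0) (hm : 0 < m)
    (hmn : Int.gcd m n = 1) (hm2 : m % 2 = 0) (h : 2 * m * n = s ^ 2) :
    ∃ i j : ℤ, i ≠ 0 ∧ j ≠ 0 ∧ j ^ 4 + 4 * i ^ 4 = m ^ 2 + n ^ 2 := by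
  obtain ⟨k, rfl⟩ := Int.dvd_of_emod_eq_zero hm2
  have hs2 : (2 : ℤ) ∣ s :=
    Int.prime_two.dvd_of_dvd_pow (n := 2) ⟨2 * k * n, by rw [← h]; ring⟩
  obtain ⟨t, rfl⟩ := hs2
  have hkn : Int.gcd k n = 1 := by
    rw [← Int.isCoprime_iff_gcd_eq_one] at hmn ⊢
    exact hmn.of_mul_left_right
  obtain ⟨i, j, rfl, rfl⟩ :=
    exists_eq_sq_sq_of_coprime (c := t) (by omega : 0 < k) hkn (by linarith)
  refine ⟨i, j, ?_, ?_, by ring⟩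
  · rintro rfl
    simp at hm
  · rintro rfl
    apply hs
    have : (2 * t) ^ 2 = 0 := by rw [← h]; ring
    exact pow_eq_zero_iff (two_ne_zero) |>.mp this

/-- A solution of `x⁴ + 4y⁴ = z²` with `x` odd and coprime to `y` yields one with a smaller right
hand side. Parametrizing `(x²)² + (2y²)² = z²` gives `x² = r⁴ - s⁴`, `y² = r²s²` and
`z = r⁴ + s⁴`; parametrizing `x² + (s²)² = (r²)²` gives coprime `m`, `n` with `2mn = s²` and
`m² + n² = r²`. -/
lemma descent_step {x y z : ℤ} (hy : y ≠ 0) (hz : 0 < z) (hxy : Int.gcd x y = 1)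
    (hx : x % 2 = 1) (h : x ^ 4 + 4 * y ^ 4 = z ^ 2) :
    ∃ i j r : ℤ, i ≠ 0 ∧ j ≠ 0 ∧ j ^ 4 + 4 * i ^ 4 = r ^ 2 ∧ |r| < z := by
  have hxy' : IsCoprime x y := Int.isCoprime_iff_gcd_eq_one.mpr hxy
  have hx2 : IsCoprime x 2 := ⟨1, -(x / 2), by omega⟩
  obtain ⟨a, b, h1, h2, h3, hab, hpar, ha⟩ :=
    PythagoreanTriple.coprime_classification' (x := x ^ 2) (y := 2 * y ^ 2) (z := z)
      (by unfold PythagoreanTriple; linarith)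
      (Int.isCoprime_iff_gcd_eq_one.mp
        (IsCoprime.mul_right hx2.pow_left hxy'.pow))
      (by rw [pow_two, Int.mul_emod, hx]; rfl) hz
  have hy2 : 0 < y ^ 2 := by positivity
  have hab' : a * b = y ^ 2 := by linarith
  have ha0 : 0 < a := by
    rcases ha.lt_or_eq with h | h
    · exact h
    · rw [← h] at hab'; simp at hab'; omega
  obtain ⟨r, s, rfl, rfl⟩ := exists_eq_sq_sq_of_coprime ha0 hab hab'
  have hs : s ≠ 0 := by
    rintro rfl
    simp at hab'; omega
  have hr : r ≠ 0 := by
    rintro rfl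
    simp at ha0
  have hrs : IsCoprime (s ^ 2) (r ^ 2) := (Int.isCoprime_iff_gcd_eq_one.mpr hab).symm
  have hxs : IsCoprime (x ^ 2) (s ^ 2) := by
    rw [h1]
    have : IsCoprime ((r ^ 2) ^ 2) (s ^ 2) := hrs.symm.pow_left
    have h5 : (r ^ 2) ^ 2 - (s ^ 2) ^ 2 = (r ^ 2) ^ 2 + (-s ^ 2) * s ^ 2 := by ring
    rw [h5]
    exact this.add_mul_right_left _
  have hxs' : IsCoprime x (s ^ 2) := hxs.of_isCoprime_of_dvd_left (dvd_pow_self _ two_ne_zero)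
  obtain ⟨m, n, -, h5, h6, hmn, hpar', hm⟩ :=
    PythagoreanTriple.coprime_classification' (x := x) (y := s ^ 2) (z := r ^ 2)
      (by unfold PythagoreanTriple; linarith)
      (Int.isCoprime_iff_gcd_eq_one.mp hxs') hx ha0
  have hs2 : 0 < s ^ 2 := by positivity
  have hm0 : 0 < m := by
    rcases hm.lt_or_eq with h | h
    · exact h
    · rw [← h] at h5; simp at h5; omega
  have hn0 : 0 < n := by
    by_contra hn
    nlinarith [mul_nonneg hm0.le (show 0 ≤ -n by omega)]
  have hlt : |r| < z := by
    have h7 : |r| ^ 2 = r ^ 2 := sq_abs r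
    have h8 : 1 ≤ |r| := Int.one_le_abs hr
    have h9 : 0 < (s ^ 2) ^ 2 := by positivity
    nlinarith
  rcases hpar' with ⟨hme, -⟩ | ⟨-, hne⟩
  · obtain ⟨i, j, hi, hj, hij⟩ := sq_add_sq_of_two_mul_eq_sq hs hm0 hmn hme h5.symm
    exact ⟨i, j, r, hi, hj, by rw [hij, h6], hlt⟩
  · obtain ⟨i, j, hi, hj, hij⟩ := sq_add_sq_of_two_mul_eq_sq hs hn0
      (by rwa [Int.gcd_comm]) hne (by rw [h5]; ring)
    exact ⟨i, j, r, hi, hj, by rw [hij, h6]; ring, hlt⟩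

theorem fourth_add_four_mul_fourth_ne_sq {x y : ℤ} (hx : x ≠ 0) (hy : y ≠ 0) (z : ℤ) :
    x ^ 4 + 4 * y ^ 4 ≠ z ^ 2 := by
  induction hN : z.natAbs using Nat.strong_induction_on generalizing x y z with
  | _ N ih =>
  intro h
  have hz : 0 < |z| := by
    rw [abs_pos]
    rintro rfl
    have : 0 < x ^ 4 + 4 * y ^ 4 := by positivity
    simp [h] at this
  by_cases hxy : Int.gcd x y = 1
  · rcases Int.emod_two_eq_zero_or_one x with hx2 | hx2
    · -- For `x = 2u` and `z = 2t` the equation reads `y⁴ + 4u⁴ = t²`.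
      obtain ⟨u, rfl⟩ := Int.dvd_of_emod_eq_zero hx2
      have hz2 : (2 : ℤ) ∣ z :=
        Int.prime_two.dvd_of_dvd_pow (n := 2) ⟨8 * u ^ 4 + 2 * y ^ 4, by rw [← h]; ring⟩
      obtain ⟨t, rfl⟩ := hz2
      have ht : t ≠ 0 := by
        rintro rfl
        simp at hz
      exact ih t.natAbs (by omega) hy (by simpa using hx : u ≠ 0) t rfl (by linarith)
    · obtain ⟨i, j, r, hi, hj, hij, hr⟩ :=
        descent_step hy hz hxy hx2 (by rw [sq_abs]; exact h)
      rw [Int.abs_eq_natAbs, Int.abs_eq_natAbs] at hr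
      exact ih r.natAbs (by omega) hj hi r rfl hij
  · obtain ⟨p, hp, hpxy⟩ := Nat.exists_prime_and_dvd hxy
    obtain ⟨u, rfl⟩ := (Int.natCast_dvd_natCast.mpr hpxy).trans (Int.gcd_dvd_left x y)
    obtain ⟨v, rfl⟩ := (Int.natCast_dvd_natCast.mpr hpxy).trans (Int.gcd_dvd_right _ y)
    have hpz : ((p : ℤ) ^ 2) ∣ z := by
      rw [← Int.pow_dvd_pow_iff (two_ne_zero)]
      exact ⟨u ^ 4 + 4 * v ^ 4, by rw [← h]; ring⟩
    obtain ⟨t, rfl⟩ := hpz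
    have hp0 : (p : ℤ) ≠ 0 := by exact_mod_cast hp.ne_zero
    have ht : 0 < t.natAbs := by
      rw [Int.natAbs_pos]
      rintro rfl
      simp at hz
    refine ih t.natAbs ?_ (right_ne_zero_of_mul hx) (right_ne_zero_of_mul hy) t rfl ?_
    · rw [← hN, Int.natAbs_mul, Int.natAbs_pow, Int.natAbs_natCast]
      have : 1 < p ^ 2 := Nat.one_lt_pow two_ne_zero hp.one_lt
      nlinarith
    · have hp4 : (p : ℤ) ^ 4 ≠ 0 := pow_ne_zero _ hp0
      apply mul_left_cancel₀ hp4
      linarith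

/-- Fermat's theorem that a difference of two fourth powers is not a square. -/
theorem fourth_sub_fourth_ne_sq {a b c : ℤ} (hb : b ≠ 0) (hc : c ≠ 0) :
    a ^ 4 - b ^ 4 ≠ c ^ 2 := by
  intro h
  have ha : a ≠ 0 := by
    rintro rfl
    have h1 : 0 < b ^ 4 := by positivity
    have h2 : 0 < c ^ 2 := by positivity
    linarith
  refine fourth_add_four_mul_fourth_ne_sq hc (mul_ne_zero ha hb) (a ^ 4 + b ^ 4) ?_
  rw [show c ^ 4 = (c ^ 2) ^ 2 by ring, ← h]
  ring

/-- Theorem 3: there are no coprime positive integers `p > q` of opposite parity for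
which `(p⁴−4p³q−q⁴)(p⁴+4p³q−q⁴)(p⁴−4pq³−q⁴)(p⁴+4pq³−q⁴)` is the square of an integer. -/
theorem first_family_never_perfect :
    ¬ ∃ p q : ℤ, 0 < q ∧ q < p ∧ IsCoprime p q ∧ p % 2 ≠ q % 2 ∧
      IsSquare ((p ^ 4 - 4 * p ^ 3 * q - q ^ 4) * (p ^ 4 + 4 * p ^ 3 * q - q ^ 4) *
        (p ^ 4 - 4 * p * q ^ 3 - q ^ 4) * (p ^ 4 + 4 * p * q ^ 3 - q ^ 4)) := by
  rintro ⟨p, q, hq, hpq, -, hpar, w, hw⟩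
  have hpq0 : 0 < p ^ 2 - q ^ 2 := by nlinarith
  have hp : 0 < p := hq.trans hpq
  have hw0 : w ≠ 0 := by
    rintro rfl
    -- Each factor is odd, hence so is their product.
    have hodd : Odd ((p ^ 4 - 4 * p ^ 3 * q - q ^ 4) * (p ^ 4 + 4 * p ^ 3 * q - q ^ 4) *
        (p ^ 4 - 4 * p * q ^ 3 - q ^ 4) * (p ^ 4 + 4 * p * q ^ 3 - q ^ 4)) := by
      have h4 : Even (4 : ℤ) := by decide
      have : Even p ↔ ¬ Even q := by
        rw [Int.even_iff, Int.even_iff]; omega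
      rw [← Int.not_even_iff_odd]
      simp only [Int.even_mul, Int.even_sub, Int.even_add, Int.even_pow, h4]
      tauto
    rw [hw] at hodd
    simp at hodd
  obtain ⟨m, hm⟩ : ∃ m : ℤ, m = (p ^ 2 + q ^ 2) ^ 2 := ⟨_, rfl⟩
  obtain ⟨n, hn⟩ : ∃ n : ℤ, n = 2 * p * q * (p ^ 2 - q ^ 2) := ⟨_, rfl⟩
  have hm0 : 0 < m := by rw [hm]; positivity
  have hn0 : 0 < n := by rw [hn]; positivity
  have hE : (m ^ 2 - n ^ 2) ^ 2 - (2 * m * n) ^ 2 = w ^ 2 := by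
    rw [pow_two w, ← hw, hm, hn]
    ring
  refine fourth_sub_fourth_ne_sq (a := m ^ 2 - n ^ 2) (b := 2 * m * n) (c := (m ^ 2 + n ^ 2) * w)
    (by positivity) (mul_ne_zero (by positivity) hw0) ?_
  rw [mul_pow (m ^ 2 + n ^ 2) w, ← hE]
  ring
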